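/- arXiv:2110.03225 — 7 statements merged into one kernel-verified Lean document; each statement's English description precedes it below -/
import Mathlib

section
/- Let G be a connected finite simple graph that is not regular. If there exists a constant c > 0 such that d(u)^2 + d(v)^2 = c for every edge uv of G, then G is bi-regular, i.e., G is bipartite with partite sets A and B such that every vertex in A has the same degree and every vertex in B has the same degree (and these two degrees are distinct). -/
open Finset

/-!
By injectivity of squaring on `ℕ`, the identity `d(u)² + d(v)² = c` makes the degree of a vertex
determine the degree of each of its neighbours. By connectedness, some edge `xy` of a non-regular
graph joins vertices of different degrees. Along any walk starting at `x` the degrees then alternate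
between `d(x)` and `d(y)`, so these are the only two degrees and every edge joins one to the other.
-/

section Labelling

variable {V α : Type*} {G : SimpleGraph V} {f : V → α}

theorem mem_of_reachable_of_adj_closed {S : Set V} (hS : ∀ u v, G.Adj u v → u ∈ S → v ∈ S)
    {x y : V} (hxy : G.Reachable x y) (hx : x ∈ S) : y ∈ S := by
  by_contra hy
  obtain ⟨walk⟩ := hxy
  obtain ⟨d, -, hfst, hsnd⟩ := walk.exists_boundary_dart S hx hy
  exact hsnd (hS _ _ d.adj hfst)

theorem exists_adj_ne_of_reachable_of_ne {x y : V} (hxy : G.Reachable x y) (hne : f x ≠ f y) :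
    ∃ u v, G.Adj u v ∧ f u ≠ f v := by
  by_contra! hadj_eq
  exact hne <| Eq.symm <| mem_of_reachable_of_adj_closed (S := {w | f w = f x})
    (fun u v huv hu => (hadj_eq u v huv).symm.trans hu) hxy rfl

theorem eq_of_adj_of_add_eq_const {M : Type*} [Add M] [IsLeftCancelAdd M] {F : α → M}
    (hF : Function.Injective F) {c : M} (hsum : ∀ u v, G.Adj u v → F (f u) + F (f v) = c)
    {u v x y : V} (huv : G.Adj u v) (hxy : G.Adj x y) (hux : f u = f x) : f v = f y := by
  have hadd : F (f x) + F (f v) = F (f x) + F (f y) := by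
    rw [hsum x y hxy, ← hux, hsum u v huv]
  exact hF (add_left_cancel hadd)

theorem eq_or_eq_of_adj_determined (hG : G.Preconnected)
    (hdet : ∀ ⦃u v x y⦄, G.Adj u v → G.Adj x y → f u = f x → f v = f y)
    {x y : V} (hxy : G.Adj x y) (w : V) : f w = f x ∨ f w = f y := by
  refine mem_of_reachable_of_adj_closed (S := {w | f w = f x ∨ f w = f y}) ?_ (hG x w) (.inl rfl)
  rintro u v huv (hux | huy)
  · exact .inr (hdet huv hxy hux)
  · exact .inl (hdet huv hxy.symm huy)

theorem isBipartiteWith_preimage_of_adj_determined (hG : G.Preconnected)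
    (hdet : ∀ ⦃u v x y⦄, G.Adj u v → G.Adj x y → f u = f x → f v = f y)
    {x y : V} (hxy : G.Adj x y) (hne : f x ≠ f y) :
    G.IsBipartiteWith (f ⁻¹' {f x}) (f ⁻¹' {f y}) where
  disjoint := (Set.disjoint_singleton.mpr hne).preimage f
  mem_of_adj u _ huv := (eq_or_eq_of_adj_determined hG hdet hxy u).imp
    (fun hux => ⟨hux, hdet huv hxy hux⟩) (fun huy => ⟨huy, hdet huv hxy.symm huy⟩)

end Labelling

theorem biregular_of_constant_sq_degree_sum_general {V : Type*} (G : SimpleGraph V)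
    [G.LocallyFinite] (hconn : G.Preconnected)
    (hnonreg : ¬ ∃ k : ℕ, ∀ v : V, G.degree v = k) (c : ℕ)
    (hconst : ∀ u v : V, G.Adj u v → G.degree u ^ 2 + G.degree v ^ 2 = c) :
    ∃ (A B : Set V) (a b : ℕ),
      (∀ v : V, v ∈ A ∨ v ∈ B) ∧
      (∀ v : V, ¬ (v ∈ A ∧ v ∈ B)) ∧
      (∀ u v : V, G.Adj u v → (u ∈ A ∧ v ∈ B) ∨ (u ∈ B ∧ v ∈ A)) ∧
      (∀ v ∈ A, G.degree v = a) ∧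
      (∀ v ∈ B, G.degree v = b) ∧
      a ≠ b := by
  push Not at hnonreg
  obtain ⟨r, -⟩ := hnonreg 0
  obtain ⟨s, hs⟩ := hnonreg (G.degree r)
  let deg : V → ℕ := fun v => G.degree v
  obtain ⟨x, y, hxy, hne⟩ := exists_adj_ne_of_reachable_of_ne (f := deg) (hconn s r) hs
  have hdet : ∀ ⦃u v x y⦄, G.Adj u v → G.Adj x y → deg u = deg x → deg v = deg y :=
    fun _ _ _ _ => eq_of_adj_of_add_eq_const (Nat.pow_left_injective two_ne_zero) hconst
  have hbip := isBipartiteWith_preimage_of_adj_determined hconn hdet hxy hne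
  exact ⟨_, _, deg x, deg y, eq_or_eq_of_adj_determined hconn hdet hxy,
    fun _ hv => Set.disjoint_left.mp hbip.disjoint hv.1 hv.2, fun _ _ huv => hbip.mem_of_adj huv,
    fun _ hv => hv, fun _ hv => hv, hne⟩

/-- If a connected non-regular graph has `d(u)^2 + d(v)^2` equal to a positive constant `c`
over all edges `uv`, then it is bi-regular: bipartite with partite sets `A` and `B` such that
all vertices of `A` have a common degree, all vertices of `B` have a common degree, and these
two degrees are distinct. -/
theorem biregular_of_constant_sq_degree_sum {V : Type*} [Fintype V] [DecidableEq V]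
    (G : SimpleGraph V) [DecidableRel G.Adj]
    (hconn : G.Connected)
    (hnonreg : ¬ ∃ k : ℕ, ∀ v : V, G.degree v = k)
    (c : ℕ) (hc : 0 < c)
    (hconst : ∀ u v : V, G.Adj u v → G.degree u ^ 2 + G.degree v ^ 2 = c) :
    ∃ (A B : Set V) (a b : ℕ),
      (∀ v : V, v ∈ A ∨ v ∈ B) ∧
      (∀ v : V, ¬ (v ∈ A ∧ v ∈ B)) ∧
      (∀ u v : V, G.Adj u v → (u ∈ A ∧ v ∈ B) ∨ (u ∈ B ∧ v ∈ A)) ∧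
      (∀ v ∈ A, G.degree v = a) ∧
      (∀ v ∈ B, G.degree v = b) ∧
      a ≠ b :=
  biregular_of_constant_sq_degree_sum_general G hconn.preconnected hnonreg c hconst
end

section
/- Let G be a finite simple graph with m ≥ 1 edges and let α be a real number with 0 < α < 1. Then SO_α(G) ≤ m^{1-α/2} · F(G)^{α/2}. -/
open Finset

variable {V : Type*}

/-- The general Sombor index `SO_α(G) = ∑_{uv ∈ E(G)} (d(u)^2 + d(v)^2)^(α/2)`. -/
noncomputable def generalSombor [Fintype V] [DecidableEq V] (G : SimpleGraph V)
    [DecidableRel G.Adj] (α : ℝ) : ℝ :=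
  ∑ e ∈ G.edgeFinset,
    Sym2.lift ⟨fun u v => ((G.degree u : ℝ) ^ 2 + (G.degree v : ℝ) ^ 2) ^ (α / 2),
      fun u v => by dsimp only; rw [add_comm]⟩ e

/-- The forgotten index `F(G) = ∑_{uv ∈ E(G)} (d(u)^2 + d(v)^2)`. -/
noncomputable def forgottenIndex [Fintype V] [DecidableEq V] (G : SimpleGraph V)
    [DecidableRel G.Adj] : ℝ :=
  ∑ e ∈ G.edgeFinset,
    Sym2.lift ⟨fun u v => ((G.degree u : ℝ) ^ 2 + (G.degree v : ℝ) ^ 2),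
      fun u v => by dsimp only; rw [add_comm]⟩ e

theorem sum_rpow_le_card_rpow_mul_rpow_sum {ι : Type*} (s : Finset ι) {f : ι → ℝ}
    (hf : ∀ i ∈ s, 0 ≤ f i) {p : ℝ} (hp₀ : 0 ≤ p) (hp₁ : p ≤ 1) :
    ∑ i ∈ s, f i ^ p ≤ (#s : ℝ) ^ (1 - p) * (∑ i ∈ s, f i) ^ p := by
  rcases s.eq_empty_or_nonempty with rfl | hs
  · simp only [sum_empty]
    positivity
  have hcard : (0 : ℝ) < #s := mod_cast hs.card_pos
  have jensen : (#s : ℝ)⁻¹ * ∑ i ∈ s, f i ^ p ≤ ((#s : ℝ)⁻¹ * ∑ i ∈ s, f i) ^ p := by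
    simpa only [smul_eq_mul, ← mul_sum] using
      (Real.concaveOn_rpow hp₀ hp₁).le_map_sum (w := fun _ ↦ (#s : ℝ)⁻¹)
        (fun _ _ ↦ by positivity) (by simp [hcard.ne']) hf
  calc ∑ i ∈ s, f i ^ p
      ≤ #s * ((#s : ℝ)⁻¹ * ∑ i ∈ s, f i) ^ p := (inv_mul_le_iff₀ hcard).mp jensen
    _ = #s * (((#s : ℝ) ^ p)⁻¹ * (∑ i ∈ s, f i) ^ p) := by
      rw [Real.mul_rpow (by positivity) (sum_nonneg hf), Real.inv_rpow hcard.le]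
    _ = (#s : ℝ) ^ (1 - p) * (∑ i ∈ s, f i) ^ p := by
      rw [Real.rpow_sub hcard, Real.rpow_one, div_eq_mul_inv, mul_assoc]

/-- The weight `d(u)^2 + d(v)^2` of an unordered pair `s(u, v)`, whose sum over the edges is the
forgotten index. It is defined on all of `Sym2 V`, loops and non-edges included. -/
def sqDegreeSum (G : SimpleGraph V) [G.LocallyFinite] : Sym2 V → ℝ :=
  Sym2.lift ⟨fun u v ↦ (G.degree u : ℝ) ^ 2 + (G.degree v : ℝ) ^ 2, fun _ _ ↦ add_comm _ _⟩

theorem sqDegreeSum_nonneg (G : SimpleGraph V) [G.LocallyFinite] (e : Sym2 V) :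
    0 ≤ sqDegreeSum G e := by
  induction e with | _ u v =>
  simp only [sqDegreeSum, Sym2.lift_mk]
  positivity

section Indices

variable [Fintype V] [DecidableEq V] (G : SimpleGraph V) [DecidableRel G.Adj]

theorem forgottenIndex_eq_sum_sqDegreeSum :
    forgottenIndex G = ∑ e ∈ G.edgeFinset, sqDegreeSum G e :=
  rfl

theorem generalSombor_eq_sum_sqDegreeSum_rpow (α : ℝ) :
    generalSombor G α = ∑ e ∈ G.edgeFinset, sqDegreeSum G e ^ (α / 2) := by
  refine sum_congr rfl fun e _ ↦ ?_
  induction e with | _ u v => rfl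

theorem generalSombor_le_of_mem_Ioo_general {α : ℝ} (hα₀ : 0 ≤ α) (hα₂ : α ≤ 2) :
    generalSombor G α ≤
      (#G.edgeFinset : ℝ) ^ (1 - α / 2) * forgottenIndex G ^ (α / 2) := by
  rw [generalSombor_eq_sum_sqDegreeSum_rpow, forgottenIndex_eq_sum_sqDegreeSum]
  exact sum_rpow_le_card_rpow_mul_rpow_sum _ (fun e _ ↦ sqDegreeSum_nonneg G e)
    (by linarith) (by linarith)

end Indices

theorem generalSombor_le_of_mem_Ioo [Fintype V] [DecidableEq V]
    (G : SimpleGraph V) [DecidableRel G.Adj]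
    (hm : 1 ≤ G.edgeFinset.card) (α : ℝ) (hα : 0 < α ∧ α < 1) :
    generalSombor G α ≤
      (G.edgeFinset.card : ℝ) ^ (1 - α / 2) * forgottenIndex G ^ (α / 2) :=
  generalSombor_le_of_mem_Ioo_general G hα.1.le (by linarith [hα.2])
end

section
/- Let G be a finite simple graph on n ≥ 2 vertices and let α be a real number with α < 0. Then SO_α(G) ≤ 2^{-1+α/2} · n · (n−1), with equality if and only if G is the complete graph K_2 on two vertices. -/
open Finset

variable {V : Type*}

/-!
Every edge joins vertices of positive degree, so for `α ≤ 0` its weight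
`(d(u)^2 + d(v)^2)^(α/2)` is at most `2^(α/2)`, and there are at most `n.choose 2` edges. For
`α < 0`, equality forces both endpoints of every edge to have degree one and `G` to be complete;
in a complete graph all degrees are `n - 1`, so `n = 2`.
-/

lemma two_le_sq_add_sq {R : Type*} [CommRing R] [LinearOrder R] [IsStrictOrderedRing R] {a b : R}
    (ha : 1 ≤ a) (hb : 1 ≤ b) : 2 ≤ a ^ 2 + b ^ 2 := by
  linarith [one_le_pow₀ ha (n := 2), one_le_pow₀ hb (n := 2)]

lemma sq_add_sq_eq_two_iff {R : Type*} [CommRing R] [LinearOrder R] [IsStrictOrderedRing R]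
    {a b : R} (ha : 1 ≤ a) (hb : 1 ≤ b) : a ^ 2 + b ^ 2 = 2 ↔ a = 1 ∧ b = 1 := by
  refine ⟨fun h ↦ ⟨?_, ?_⟩, ?_⟩
  · nlinarith
  · nlinarith
  · rintro ⟨rfl, rfl⟩
    norm_num

lemma two_rpow_neg_one_add_mul_mul_sub_one (n : ℕ) (x : ℝ) :
    (2 : ℝ) ^ (-1 + x) * n * (n - 1) = n.choose 2 * 2 ^ x := by
  rw [Real.rpow_add two_pos, Real.rpow_neg_one, Nat.cast_choose_two]
  ring

lemma one_le_cast_degree_of_adj {G : SimpleGraph V} {u v : V} [Fintype (G.neighborSet u)]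
    (h : G.Adj u v) : (1 : ℝ) ≤ G.degree u := by
  exact_mod_cast (G.degree_pos_iff_exists_adj u).2 ⟨v, h⟩

section Weight

variable (G : SimpleGraph V) [G.LocallyFinite] {α : ℝ} {u v : V}

/-- The contribution `(d(u)^2 + d(v)^2)^(α/2)` of the unordered pair `s(u, v)` to the general
Sombor index, defined for all pairs, adjacent or not. -/
noncomputable def somborWeight (α : ℝ) : Sym2 V → ℝ :=
  Sym2.lift ⟨fun u v ↦ ((G.degree u : ℝ) ^ 2 + (G.degree v : ℝ) ^ 2) ^ (α / 2),
    fun _ _ ↦ by simp only [add_comm]⟩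

lemma somborWeight_mk (α : ℝ) (u v : V) :
    somborWeight G α s(u, v) = ((G.degree u : ℝ) ^ 2 + (G.degree v : ℝ) ^ 2) ^ (α / 2) :=
  rfl

variable {G}

lemma somborWeight_le_of_mem_edgeSet (hα : α ≤ 0) {e : Sym2 V} (he : e ∈ G.edgeSet) :
    somborWeight G α e ≤ 2 ^ (α / 2) := by
  induction e with | _ u v
  have huv : G.Adj u v := he
  exact Real.rpow_le_rpow_of_nonpos two_pos
    (two_le_sq_add_sq (one_le_cast_degree_of_adj huv) (one_le_cast_degree_of_adj huv.symm))
    (by linarith)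

lemma somborWeight_eq_iff_of_adj (hα : α ≠ 0) (h : G.Adj u v) :
    somborWeight G α s(u, v) = 2 ^ (α / 2) ↔ G.degree u = 1 ∧ G.degree v = 1 := by
  rw [somborWeight_mk, Real.rpow_left_inj (by positivity) zero_le_two (by simpa using hα),
    sq_add_sq_eq_two_iff (one_le_cast_degree_of_adj h) (one_le_cast_degree_of_adj h.symm),
    Nat.cast_eq_one, Nat.cast_eq_one]

end Weight

section Fintype

variable [Fintype V] (G : SimpleGraph V) [DecidableRel G.Adj] {α : ℝ}

lemma card_edgeFinset_eq_card_choose_two_iff :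
    #G.edgeFinset = (Fintype.card V).choose 2 ↔ G = ⊤ := by
  classical
  rw [← SimpleGraph.card_edgeFinset_top_eq_card_choose_two, ← SimpleGraph.edgeFinset_inj]
  exact ⟨fun h ↦ eq_of_subset_of_card_le (SimpleGraph.edgeFinset_mono le_top) h.ge,
    congrArg card⟩

variable [DecidableEq V]

lemma forall_adj_top_degree_eq_one_iff [Nontrivial V] :
    (∀ u v, (⊤ : SimpleGraph V).Adj u v → (⊤ : SimpleGraph V).degree u = 1) ↔
      Fintype.card V = 2 := by
  simp only [SimpleGraph.top_adj, SimpleGraph.complete_graph_degree]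
  obtain ⟨a, b, hab⟩ := exists_pair_ne V
  exact ⟨fun h ↦ by have := h a b hab; omega, fun h _ _ _ ↦ by omega⟩

lemma generalSombor_eq_sum_somborWeight (α : ℝ) :
    generalSombor G α = ∑ e ∈ G.edgeFinset, somborWeight G α e :=
  rfl

lemma generalSombor_le_card_edgeFinset_mul (hα : α ≤ 0) :
    generalSombor G α ≤ #G.edgeFinset * 2 ^ (α / 2) := by
  rw [generalSombor_eq_sum_somborWeight, ← nsmul_eq_mul]
  exact sum_le_card_nsmul _ _ _ fun _ he ↦
    somborWeight_le_of_mem_edgeSet hα (SimpleGraph.mem_edgeFinset.1 he)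

lemma generalSombor_eq_card_edgeFinset_mul_iff (hα : α < 0) :
    generalSombor G α = #G.edgeFinset * 2 ^ (α / 2) ↔ ∀ u v, G.Adj u v → G.degree u = 1 := by
  rw [← nsmul_eq_mul, ← sum_const, generalSombor_eq_sum_somborWeight,
    sum_eq_sum_iff_of_le fun _ he ↦
      somborWeight_le_of_mem_edgeSet hα.le (SimpleGraph.mem_edgeFinset.1 he), Sym2.forall]
  simp only [SimpleGraph.mem_edgeFinset, SimpleGraph.mem_edgeSet]
  exact ⟨fun h u v huv ↦ ((somborWeight_eq_iff_of_adj hα.ne huv).1 (h u v huv)).1,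
    fun h u v huv ↦
      (somborWeight_eq_iff_of_adj hα.ne huv).2 ⟨h u v huv, h v u huv.symm⟩⟩

end Fintype

theorem generalSombor_le_of_neg [Fintype V] [DecidableEq V]
    (G : SimpleGraph V) [DecidableRel G.Adj]
    (hn : 2 ≤ Fintype.card V) (α : ℝ) (hα : α < 0) :
    generalSombor G α ≤
        (2 : ℝ) ^ (-1 + α / 2) * (Fintype.card V : ℝ) * ((Fintype.card V : ℝ) - 1) ∧
      (generalSombor G α =
          (2 : ℝ) ^ (-1 + α / 2) * (Fintype.card V : ℝ) * ((Fintype.card V : ℝ) - 1) ↔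
        Fintype.card V = 2 ∧ G = ⊤) := by
  have : Nontrivial V := Fintype.one_lt_card_iff_nontrivial.1 hn
  have hpow : (0 : ℝ) < 2 ^ (α / 2) := by positivity
  have hweights := generalSombor_le_card_edgeFinset_mul G hα.le
  have hedges : #G.edgeFinset * (2 : ℝ) ^ (α / 2) ≤
      (Fintype.card V).choose 2 * 2 ^ (α / 2) := by
    gcongr
    exact G.card_edgeFinset_le_card_choose_two
  rw [two_rpow_neg_one_add_mul_mul_sub_one]
  refine ⟨hweights.trans hedges, ?_⟩
  calc generalSombor G α = (Fintype.card V).choose 2 * 2 ^ (α / 2)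
    _ ↔ generalSombor G α = #G.edgeFinset * 2 ^ (α / 2) ∧
        #G.edgeFinset * (2 : ℝ) ^ (α / 2) = (Fintype.card V).choose 2 * 2 ^ (α / 2) :=
      ⟨fun h ↦ ⟨hweights.antisymm (h ▸ hedges), hedges.antisymm (h ▸ hweights)⟩,
        fun h ↦ h.1.trans h.2⟩
    _ ↔ (∀ u v, G.Adj u v → G.degree u = 1) ∧ G = ⊤ := by
      rw [generalSombor_eq_card_edgeFinset_mul_iff G hα, mul_left_inj' hpow.ne', Nat.cast_inj,
        card_edgeFinset_eq_card_choose_two_iff]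
    _ ↔ Fintype.card V = 2 ∧ G = ⊤ := and_congr_left fun hG ↦ by
      subst hG
      convert forall_adj_top_degree_eq_one_iff (V := V)
end

section
/- Let G be a finite simple graph on n ≥ 2 vertices and let α be a real number with α ≥ 1. Then SO_α(G) + SO_α(G̅) ≥ n·(n−1)^{1+α} / 2^{1+α}. -/
open Finset

variable {V : Type*}

/-!
For `α ≥ 0`, each of `d(u)^α` and `d(v)^α` is at most `(d(u)^2 + d(v)^2)^(α/2)`, hence so is their
mean. Summing the means over the edges gives `∑ v, d(v)^(1+α) / 2`, as `v` lies on `d(v)` edges.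
Since the degrees of `v` in `G` and `Gᶜ` add up to `n - 1`, convexity of `x ↦ x^(1+α)` bounds the
contribution of `v` to the two sums together from below by `((n-1)/2)^(1+α)`.
-/

section RealPowers

variable {x y α p : ℝ}

theorem rpow_le_sq_add_sq_rpow_half (hx : 0 ≤ x) (y : ℝ) (hα : 0 ≤ α) :
    x ^ α ≤ (x ^ 2 + y ^ 2) ^ (α / 2) :=
  calc x ^ α = (x ^ 2) ^ (α / 2) := by rw [← Real.rpow_natCast_mul hx]; congr 1; push_cast; ring
    _ ≤ (x ^ 2 + y ^ 2) ^ (α / 2) := by gcongr; exact le_add_of_nonneg_right (sq_nonneg y)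

theorem half_rpow_add_le_sq_add_sq_rpow_half (hx : 0 ≤ x) (hy : 0 ≤ y) (hα : 0 ≤ α) :
    x ^ α / 2 + y ^ α / 2 ≤ (x ^ 2 + y ^ 2) ^ (α / 2) := by
  have hx_le := rpow_le_sq_add_sq_rpow_half hx y hα
  have hy_le := rpow_le_sq_add_sq_rpow_half hy x hα
  rw [add_comm (y ^ 2)] at hy_le
  linarith

theorem add_rpow_div_two_rpow_le_half_rpow_add (hx : 0 ≤ x) (hy : 0 ≤ y) (hp : 1 ≤ p) :
    (x + y) ^ p / 2 ^ p ≤ x ^ p / 2 + y ^ p / 2 := by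
  have h_convex : (1 / 2 * x + 1 / 2 * y) ^ p ≤ 1 / 2 * x ^ p + 1 / 2 * y ^ p :=
    (convexOn_rpow hp).2 hx hy (by norm_num) (by norm_num) (by norm_num)
  rw [← Real.div_rpow (add_nonneg hx hy) zero_le_two]
  convert h_convex using 2 <;> ring

end RealPowers

section Graph

variable [Fintype V] [DecidableEq V] (G : SimpleGraph V) [DecidableRel G.Adj]

theorem sum_edgeFinset_sum_toFinset {M : Type*} [AddCommMonoid M] (f : V → M) :
    ∑ e ∈ G.edgeFinset, ∑ v ∈ e.toFinset, f v = ∑ v, G.degree v • f v :=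
  calc ∑ e ∈ G.edgeFinset, ∑ v ∈ e.toFinset, f v
      = ∑ v, ∑ _e ∈ G.incidenceFinset v, f v :=
        sum_comm' fun e v => by simp [G.incidenceFinset_eq_filter]
    _ = ∑ v, G.degree v • f v := by
        simp only [sum_const, G.card_incidenceFinset_eq_degree]

theorem degree_add_degree_compl_add_one (v : V) :
    G.degree v + Gᶜ.degree v + 1 = Fintype.card V := by
  have h_compl := G.degree_compl v
  have h_lt := G.degree_lt_card_verts v
  lia

theorem sum_degree_rpow_div_two_le_generalSombor {α : ℝ} (hα : 0 ≤ α) :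
    ∑ v, (G.degree v : ℝ) ^ (1 + α) / 2 ≤ generalSombor G α :=
  calc ∑ v, (G.degree v : ℝ) ^ (1 + α) / 2
      = ∑ v, G.degree v • ((G.degree v : ℝ) ^ α / 2) := by
        refine sum_congr rfl fun v _ => ?_
        rw [Real.rpow_one_add' (Nat.cast_nonneg _) (by positivity), nsmul_eq_mul, mul_div_assoc]
    _ = ∑ e ∈ G.edgeFinset, ∑ v ∈ e.toFinset, (G.degree v : ℝ) ^ α / 2 :=
        (sum_edgeFinset_sum_toFinset G _).symm
    _ ≤ generalSombor G α := by
        refine sum_le_sum fun e he => ?_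
        induction e with
        | _ u v =>
          have huv : G.Adj u v := SimpleGraph.mem_edgeFinset.mp he
          rw [Sym2.toFinset_mk_eq, sum_pair huv.ne]
          exact half_rpow_add_le_sq_add_sq_rpow_half (Nat.cast_nonneg _)
            (Nat.cast_nonneg _) hα

theorem card_mul_rpow_div_le_sum_degree_rpow_add_sum_degree_compl_rpow {p : ℝ} (hp : 1 ≤ p) :
    (Fintype.card V : ℝ) * ((Fintype.card V : ℝ) - 1) ^ p / 2 ^ p ≤
      ∑ v, (G.degree v : ℝ) ^ p / 2 + ∑ v, (Gᶜ.degree v : ℝ) ^ p / 2 :=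
  calc (Fintype.card V : ℝ) * ((Fintype.card V : ℝ) - 1) ^ p / 2 ^ p
      = ∑ v, ((G.degree v : ℝ) + Gᶜ.degree v) ^ p / 2 ^ p := by
        have h_degree (v : V) :
            (G.degree v : ℝ) + Gᶜ.degree v = (Fintype.card V : ℝ) - 1 :=
          eq_sub_of_add_eq (mod_cast degree_add_degree_compl_add_one G v)
        simp only [h_degree, sum_const, card_univ, nsmul_eq_mul, mul_div_assoc]
    _ ≤ ∑ v, ((G.degree v : ℝ) ^ p / 2 + (Gᶜ.degree v : ℝ) ^ p / 2) :=
        sum_le_sum fun _ _ => add_rpow_div_two_rpow_le_half_rpow_add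
          (Nat.cast_nonneg _) (Nat.cast_nonneg _) hp
    _ = _ := sum_add_distrib

theorem nordhaus_gaddum_lower_of_one_le_general {α : ℝ} (hα : 0 ≤ α) :
    generalSombor G α + generalSombor Gᶜ α ≥
      (Fintype.card V : ℝ) * ((Fintype.card V : ℝ) - 1) ^ (1 + α) / (2 : ℝ) ^ (1 + α) :=
  (card_mul_rpow_div_le_sum_degree_rpow_add_sum_degree_compl_rpow G
    (le_add_of_nonneg_right hα)).trans
    (add_le_add (sum_degree_rpow_div_two_le_generalSombor G hα)
      (sum_degree_rpow_div_two_le_generalSombor Gᶜ hα))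

end Graph

theorem nordhaus_gaddum_lower_of_one_le [Fintype V] [DecidableEq V]
    (G : SimpleGraph V) [DecidableRel G.Adj]
    (hn : 2 ≤ Fintype.card V) (α : ℝ) (hα : 1 ≤ α) :
    generalSombor G α + generalSombor Gᶜ α ≥
      (Fintype.card V : ℝ) * ((Fintype.card V : ℝ) - 1) ^ (1 + α) / (2 : ℝ) ^ (1 + α) :=
  nordhaus_gaddum_lower_of_one_le_general G (zero_le_one.trans hα)
end

section
/- Let G be a finite simple graph on n ≥ 2 vertices and let α be a real number with 0 < α < 1. Then SO_α(G) + SO_α(G̅) ≥ n^{α/2} · (n−1)^{3α/2} / 2^{3α/2}. -/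
open Finset

variable {V : Type*}

/-!
For `0 < p ≤ 1` the map `x ↦ x ^ p` is subadditive on `[0, ∞)`. With `p = α / 2`, pulling the power
out of the sum over edges bounds the Sombor index below by the `p`-th power of
`∑_{uv ∈ E} (d(u)^2 + d(v)^2) = ∑_v d(v)^3`. Pulling it out of the sum over `G` and its complement
as well leaves `∑_v (d(v)^3 + (n - 1 - d(v))^3)`, which is at least `n (n - 1)^3 / 4` by convexity.
-/

theorem rpow_sum_le_sum_rpow {ι : Type*} {s : Finset ι} {f : ι → ℝ} (hf : ∀ i ∈ s, 0 ≤ f i)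
    {p : ℝ} (hp : 0 < p) (hp1 : p ≤ 1) : (∑ i ∈ s, f i) ^ p ≤ ∑ i ∈ s, f i ^ p :=
  le_sum_of_subadditive_on_pred (· ^ p) (0 ≤ ·) (Real.zero_rpow hp.ne').le
    (fun _ _ hx hy ↦ Real.rpow_add_le_add_rpow hx hy hp.le hp1) (fun _ _ ↦ add_nonneg) f hf

section Graph

variable [Fintype V] [DecidableEq V] (G : SimpleGraph V) [DecidableRel G.Adj]

theorem degree_add_degree_compl (v : V) :
    (G.degree v : ℝ) + Gᶜ.degree v = Fintype.card V - 1 := by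
  have hlt := G.degree_lt_card_verts v
  have hsum : G.degree v + Gᶜ.degree v + 1 = Fintype.card V := by
    rw [G.degree_compl]
    lia
  exact eq_sub_of_add_eq (mod_cast hsum)

theorem card_mul_card_sub_one_pow_le_sum_degree_pow (k : ℕ) :
    (Fintype.card V : ℝ) * ((Fintype.card V : ℝ) - 1) ^ k ≤
      2 ^ (k - 1) * (∑ v, (G.degree v : ℝ) ^ k + ∑ v, (Gᶜ.degree v : ℝ) ^ k) :=
  calc
    (Fintype.card V : ℝ) * ((Fintype.card V : ℝ) - 1) ^ k
      = ∑ v, ((G.degree v : ℝ) + Gᶜ.degree v) ^ k := by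
        simp only [degree_add_degree_compl, sum_const, card_univ, nsmul_eq_mul]
    _ ≤ ∑ v, 2 ^ (k - 1) * ((G.degree v : ℝ) ^ k + (Gᶜ.degree v : ℝ) ^ k) :=
        sum_le_sum fun v _ ↦ add_pow_le (Nat.cast_nonneg _) (Nat.cast_nonneg _) k
    _ = 2 ^ (k - 1) * (∑ v, (G.degree v : ℝ) ^ k + ∑ v, (Gᶜ.degree v : ℝ) ^ k) := by
        rw [← mul_sum, sum_add_distrib]

theorem generalSombor_eq_sum_rpow_sum_toFinset (α : ℝ) :
    generalSombor G α =
      ∑ e ∈ G.edgeFinset, (∑ v ∈ e.toFinset, (G.degree v : ℝ) ^ 2) ^ (α / 2) := by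
  refine sum_congr rfl fun e he ↦ ?_
  induction e using Sym2.ind with
  | _ u v =>
    have hne : u ≠ v := (G.mem_edgeFinset.mp he : G.Adj u v).ne
    rw [Sym2.lift_mk, Sym2.toFinset_mk_eq, sum_pair hne]

theorem rpow_sum_degree_cubed_le_generalSombor {α : ℝ} (hα₀ : 0 < α) (hα₂ : α ≤ 2) :
    (∑ v, (G.degree v : ℝ) ^ 3) ^ (α / 2) ≤ generalSombor G α :=
  calc
    (∑ v, (G.degree v : ℝ) ^ 3) ^ (α / 2)
      = (∑ e ∈ G.edgeFinset, ∑ v ∈ e.toFinset, (G.degree v : ℝ) ^ 2) ^ (α / 2) := by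
        simp only [sum_edgeFinset_sum_toFinset, nsmul_eq_mul, pow_succ' _ 2]
    _ ≤ ∑ e ∈ G.edgeFinset, (∑ v ∈ e.toFinset, (G.degree v : ℝ) ^ 2) ^ (α / 2) :=
        rpow_sum_le_sum_rpow (fun _ _ ↦ by positivity) (by linarith) (by linarith)
    _ = generalSombor G α := (generalSombor_eq_sum_rpow_sum_toFinset G α).symm

theorem rpow_card_mul_le_generalSombor_add_compl [Nonempty V] {α : ℝ}
    (hα₀ : 0 < α) (hα₂ : α ≤ 2) :
    ((Fintype.card V : ℝ) * ((Fintype.card V : ℝ) - 1) ^ 3 / 4) ^ (α / 2) ≤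
      generalSombor G α + generalSombor Gᶜ α := by
  have hcard : (0 : ℝ) ≤ (Fintype.card V : ℝ) - 1 :=
    sub_nonneg.mpr (mod_cast Fintype.card_pos)
  have hcubes : (Fintype.card V : ℝ) * ((Fintype.card V : ℝ) - 1) ^ 3 / 4 ≤
      ∑ v, (G.degree v : ℝ) ^ 3 + ∑ v, (Gᶜ.degree v : ℝ) ^ 3 := by
    rw [div_le_iff₀' four_pos]
    exact (card_mul_card_sub_one_pow_le_sum_degree_pow G 3).trans_eq (by norm_num)
  calc
    ((Fintype.card V : ℝ) * ((Fintype.card V : ℝ) - 1) ^ 3 / 4) ^ (α / 2)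
      ≤ (∑ v, (G.degree v : ℝ) ^ 3 + ∑ v, (Gᶜ.degree v : ℝ) ^ 3) ^ (α / 2) :=
        Real.rpow_le_rpow (by positivity) hcubes (by positivity)
    _ ≤ (∑ v, (G.degree v : ℝ) ^ 3) ^ (α / 2) + (∑ v, (Gᶜ.degree v : ℝ) ^ 3) ^ (α / 2) :=
        Real.rpow_add_le_add_rpow (by positivity) (by positivity) (by positivity) (by linarith)
    _ ≤ generalSombor G α + generalSombor Gᶜ α :=
        add_le_add (rpow_sum_degree_cubed_le_generalSombor G hα₀ hα₂)
          (rpow_sum_degree_cubed_le_generalSombor Gᶜ hα₀ hα₂)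

theorem nordhaus_gaddum_lower_of_mem_Ioo_general [Nonempty V] {α : ℝ}
    (hα₀ : 0 < α) (hα₂ : α ≤ 2) :
    generalSombor G α + generalSombor Gᶜ α ≥
      (Fintype.card V : ℝ) ^ (α / 2) * ((Fintype.card V : ℝ) - 1) ^ (3 * α / 2) /
        (2 : ℝ) ^ (3 * α / 2) := by
  have hcard : (0 : ℝ) ≤ (Fintype.card V : ℝ) - 1 :=
    sub_nonneg.mpr (mod_cast Fintype.card_pos)
  have rpow_three_mul {x : ℝ} (hx : 0 ≤ x) : x ^ (3 * α / 2) = (x ^ 3) ^ (α / 2) := by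
    rw [mul_div_assoc, Real.rpow_mul hx, Real.rpow_ofNat]
  calc
    (Fintype.card V : ℝ) ^ (α / 2) * ((Fintype.card V : ℝ) - 1) ^ (3 * α / 2) /
        (2 : ℝ) ^ (3 * α / 2)
      = ((Fintype.card V : ℝ) * ((Fintype.card V : ℝ) - 1) ^ 3 / 2 ^ 3) ^ (α / 2) := by
        rw [rpow_three_mul hcard, rpow_three_mul zero_le_two,
          Real.div_rpow (by positivity) (by positivity),
          Real.mul_rpow (by positivity) (by positivity)]
    _ ≤ ((Fintype.card V : ℝ) * ((Fintype.card V : ℝ) - 1) ^ 3 / 4) ^ (α / 2) := by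
        gcongr
        norm_num
    _ ≤ generalSombor G α + generalSombor Gᶜ α :=
        rpow_card_mul_le_generalSombor_add_compl G hα₀ hα₂

end Graph

theorem nordhaus_gaddum_lower_of_mem_Ioo [Fintype V] [DecidableEq V]
    (G : SimpleGraph V) [DecidableRel G.Adj]
    (hn : 2 ≤ Fintype.card V) (α : ℝ) (hα : 0 < α ∧ α < 1) :
    generalSombor G α + generalSombor Gᶜ α ≥
      (Fintype.card V : ℝ) ^ (α / 2) * ((Fintype.card V : ℝ) - 1) ^ (3 * α / 2) /
        (2 : ℝ) ^ (3 * α / 2) := by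
  have : Nonempty V := Fintype.card_pos_iff.mp (by lia)
  exact nordhaus_gaddum_lower_of_mem_Ioo_general G hα.1 (by linarith [hα.2])
end

section
/- Let G be a finite simple graph with minimum degree δ ≥ 1 and maximum degree Δ. Then (√2/Δ) · M_2(G) ≤ SO(G) ≤ (√2/δ) · M_2(G), and both equalities hold if G is regular. -/
open Finset

variable {V : Type*}

/-- The Sombor index `SO(G) = ∑_{uv ∈ E(G)} √(d(u)^2 + d(v)^2)`. -/
noncomputable def somborIndex [Fintype V] [DecidableEq V] (G : SimpleGraph V)
    [DecidableRel G.Adj] : ℝ :=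
  ∑ e ∈ G.edgeFinset,
    Sym2.lift ⟨fun u v => Real.sqrt ((G.degree u : ℝ) ^ 2 + (G.degree v : ℝ) ^ 2),
      fun u v => by dsimp only; rw [add_comm]⟩ e

/-- The second Zagreb index `M₂(G) = ∑_{uv ∈ E(G)} d(u)·d(v)`. -/
noncomputable def secondZagreb [Fintype V] [DecidableEq V] (G : SimpleGraph V)
    [DecidableRel G.Adj] : ℝ :=
  ∑ e ∈ G.edgeFinset,
    Sym2.lift ⟨fun u v => (G.degree u : ℝ) * (G.degree v : ℝ),
      fun u v => by dsimp only; rw [mul_comm]⟩ e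

/-!
Both bounds hold edge by edge: for an edge with end degrees `a` and `b`, the square
`(√2 * (a * b)) ^ 2 = a ^ 2 * b ^ 2 + a ^ 2 * b ^ 2` lies between `δ ^ 2 * (a ^ 2 + b ^ 2)` and
`Δ ^ 2 * (a ^ 2 + b ^ 2)`.
-/

section

variable {x y d D : ℝ}

lemma sqrt_two_mul_mul_le_mul_sqrt_sq_add_sq (hx : |x| ≤ D) (hy : |y| ≤ D) :
    √2 * (x * y) ≤ D * √(x ^ 2 + y ^ 2) := by
  have hD : 0 ≤ D := (abs_nonneg x).trans hx
  have hx_sq : x ^ 2 ≤ D ^ 2 := sq_le_sq.2 (hx.trans (le_abs_self D))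
  have hy_sq : y ^ 2 ≤ D ^ 2 := sq_le_sq.2 (hy.trans (le_abs_self D))
  refine le_of_sq_le_sq ?_ (by positivity)
  calc (√2 * (x * y)) ^ 2 = x ^ 2 * y ^ 2 + x ^ 2 * y ^ 2 := by
        rw [mul_pow, Real.sq_sqrt zero_le_two]; ring
    _ ≤ D ^ 2 * y ^ 2 + x ^ 2 * D ^ 2 := by gcongr
    _ = (D * √(x ^ 2 + y ^ 2)) ^ 2 := by
        rw [mul_pow, Real.sq_sqrt (by positivity)]; ring

lemma mul_sqrt_sq_add_sq_le_sqrt_two_mul_mul (hd : 0 ≤ d) (hx : d ≤ x) (hy : d ≤ y) :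
    d * √(x ^ 2 + y ^ 2) ≤ √2 * (x * y) := by
  have hx₀ : 0 ≤ x := hd.trans hx
  have hy₀ : 0 ≤ y := hd.trans hy
  refine le_of_sq_le_sq ?_ (by positivity)
  calc (d * √(x ^ 2 + y ^ 2)) ^ 2 = x ^ 2 * d ^ 2 + d ^ 2 * y ^ 2 := by
        rw [mul_pow, Real.sq_sqrt (by positivity)]; ring
    _ ≤ x ^ 2 * y ^ 2 + x ^ 2 * y ^ 2 := by gcongr
    _ = (√2 * (x * y)) ^ 2 := by
        rw [mul_pow, Real.sq_sqrt zero_le_two]; ring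

end

section

variable [Fintype V] [DecidableEq V] (G : SimpleGraph V) [DecidableRel G.Adj]

lemma sqrt_two_mul_secondZagreb_le_maxDegree_mul_somborIndex :
    √2 * secondZagreb G ≤ G.maxDegree * somborIndex G := by
  have abs_degree_le (v : V) : |(G.degree v : ℝ)| ≤ G.maxDegree := by
    simpa only [Nat.abs_cast, Nat.cast_le] using G.degree_le_maxDegree v
  simp only [secondZagreb, somborIndex, mul_sum]
  refine sum_le_sum fun e _ ↦ ?_
  induction e with
  | _ u v => exact sqrt_two_mul_mul_le_mul_sqrt_sq_add_sq (abs_degree_le u) (abs_degree_le v)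

lemma minDegree_mul_somborIndex_le_sqrt_two_mul_secondZagreb :
    G.minDegree * somborIndex G ≤ √2 * secondZagreb G := by
  have le_degree (v : V) : (G.minDegree : ℝ) ≤ G.degree v :=
    Nat.cast_le.2 (G.minDegree_le_degree v)
  simp only [secondZagreb, somborIndex, mul_sum]
  refine sum_le_sum fun e _ ↦ ?_
  induction e with
  | _ u v =>
    exact mul_sqrt_sq_add_sq_le_sqrt_two_mul_mul (Nat.cast_nonneg _) (le_degree u) (le_degree v)

end

theorem sombor_between_secondZagreb [Fintype V] [DecidableEq V]
    (G : SimpleGraph V) [DecidableRel G.Adj]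
    (hδ : 1 ≤ G.minDegree) :
    (Real.sqrt 2 / (G.maxDegree : ℝ) * secondZagreb G ≤ somborIndex G ∧
      somborIndex G ≤ Real.sqrt 2 / (G.minDegree : ℝ) * secondZagreb G) ∧
      ((∃ k : ℕ, G.IsRegularOfDegree k) →
        Real.sqrt 2 / (G.maxDegree : ℝ) * secondZagreb G = somborIndex G ∧
          somborIndex G = Real.sqrt 2 / (G.minDegree : ℝ) * secondZagreb G) := by
  have minDegree_pos : (0 : ℝ) < G.minDegree := Nat.cast_pos.2 hδ
  have maxDegree_pos : (0 : ℝ) < G.maxDegree :=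
    minDegree_pos.trans_le (Nat.cast_le.2 G.minDegree_le_maxDegree)
  have lower : √2 / G.maxDegree * secondZagreb G ≤ somborIndex G := by
    rw [div_mul_eq_mul_div, div_le_iff₀' maxDegree_pos]
    exact sqrt_two_mul_secondZagreb_le_maxDegree_mul_somborIndex G
  have upper : somborIndex G ≤ √2 / G.minDegree * secondZagreb G := by
    rw [div_mul_eq_mul_div, le_div_iff₀' minDegree_pos]
    exact minDegree_mul_somborIndex_le_sqrt_two_mul_secondZagreb G
  refine ⟨⟨lower, upper⟩, fun ⟨k, hk⟩ ↦ ?_⟩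
  have : Nonempty V := not_isEmpty_iff.1 fun _ ↦ by simp at hδ
  rw [hk.minDegree_eq] at upper ⊢
  rw [hk.maxDegree_eq] at lower ⊢
  exact ⟨lower.antisymm upper, upper.antisymm lower⟩
end

section
/- Let G be a finite simple graph with m edges and maximum degree Δ. Then M_1(G)/√2 ≤ SO(G) ≤ √(m · Δ · M_1(G)), and the left equality holds if G is regular. -/
open Finset

variable {V : Type*}

/-- The first Zagreb index `M₁(G) = ∑_{u ∈ V(G)} d(u)^2`. -/
noncomputable def firstZagreb [Fintype V] (G : SimpleGraph V)
    [DecidableRel G.Adj] : ℝ :=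
  ∑ v : V, (G.degree v : ℝ) ^ 2

/-!
Counting pairs (vertex, incident edge) in two ways gives
`∑ v, d(v) f(v) = ∑_{uv ∈ E} (f(u) + f(v))`. For `f = d` this writes `M₁` as an edge sum, and the
lower bound is `(a + b) / √2 ≤ √(a² + b²)` on each edge, with equality exactly when `a = b`.
For `f = d²`, Cauchy–Schwarz over the edges gives `SO² ≤ m ∑ v, d(v)³ ≤ m Δ M₁`.
-/

section

variable {a b : ℝ}

theorem add_div_sqrt_two_le_sqrt_sq_add_sq : (a + b) / √2 ≤ √(a ^ 2 + b ^ 2) := by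
  apply Real.le_sqrt_of_sq_le
  rw [div_pow, Real.sq_sqrt zero_le_two, div_le_iff₀' zero_lt_two]
  exact add_sq_le

theorem add_div_sqrt_two_eq_sqrt_sq_add_sq_iff (h : 0 ≤ a + b) :
    (a + b) / √2 = √(a ^ 2 + b ^ 2) ↔ a = b := by
  have defect_eq : a ^ 2 + b ^ 2 - (a + b) ^ 2 / 2 = (a - b) ^ 2 / 2 := by ring
  rw [eq_comm, Real.sqrt_eq_iff_eq_sq (by positivity) (by positivity), div_pow,
    Real.sq_sqrt zero_le_two, ← sub_eq_zero, defect_eq, div_eq_zero_iff,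
    or_iff_left two_ne_zero, sq_eq_zero_iff, sub_eq_zero]

end

section

variable [Fintype V] (G : SimpleGraph V) [DecidableRel G.Adj]

theorem sum_degree_nsmul_eq_sum_edgeFinset {M : Type*} [AddCommMonoid M] (f : V → M) :
    ∑ v, G.degree v • f v = ∑ e ∈ G.edgeFinset, (e.map f).add := by
  classical
  calc ∑ v, G.degree v • f v
      = ∑ v, ∑ e ∈ G.edgeFinset with v ∈ e, f v := by
        simp_rw [sum_const, ← G.incidenceFinset_eq_filter, G.card_incidenceFinset_eq_degree]
    _ = ∑ e ∈ G.edgeFinset, ∑ v ∈ e.toFinset, f v :=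
        sum_comm' (by simp [and_comm])
    _ = _ := sum_congr rfl fun e he => by
        induction e with
        | _ u v =>
          rw [Sym2.toFinset_mk_eq, sum_pair (G.mem_edgeFinset.mp he).ne, Sym2.map_mk,
            Sym2.add_mk]

theorem firstZagreb_eq_sum_edgeFinset :
    firstZagreb G = ∑ e ∈ G.edgeFinset, (e.map fun v => (G.degree v : ℝ)).add := by
  simp_rw [← sum_degree_nsmul_eq_sum_edgeFinset, firstZagreb, nsmul_eq_mul, sq]

theorem sum_degree_pow_three_eq_sum_edgeFinset :
    ∑ v, (G.degree v : ℝ) ^ 3 = ∑ e ∈ G.edgeFinset, (e.map fun v => (G.degree v : ℝ) ^ 2).add := by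
  simp_rw [← sum_degree_nsmul_eq_sum_edgeFinset, nsmul_eq_mul, ← pow_succ']

theorem sum_degree_pow_three_le_maxDegree_mul_firstZagreb :
    ∑ v, (G.degree v : ℝ) ^ 3 ≤ G.maxDegree * firstZagreb G := by
  rw [firstZagreb, mul_sum]
  gcongr with v
  rw [pow_succ']
  gcongr
  exact G.degree_le_maxDegree v

variable [DecidableEq V]

theorem firstZagreb_div_sqrt_two_le_somborIndex : firstZagreb G / √2 ≤ somborIndex G := by
  rw [firstZagreb_eq_sum_edgeFinset, sum_div, somborIndex]
  exact sum_le_sum fun e _ => e.ind fun _ _ => add_div_sqrt_two_le_sqrt_sq_add_sq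

theorem firstZagreb_div_sqrt_two_eq_somborIndex_iff :
    firstZagreb G / √2 = somborIndex G ↔ ∀ u v, G.Adj u v → G.degree u = G.degree v := by
  rw [firstZagreb_eq_sum_edgeFinset, sum_div, somborIndex, sum_eq_sum_iff_of_le
    fun e _ => e.ind fun _ _ => add_div_sqrt_two_le_sqrt_sq_add_sq]
  simp only [Sym2.forall, SimpleGraph.mem_edgeFinset, SimpleGraph.mem_edgeSet, Sym2.lift_mk,
    Sym2.map_mk, Sym2.add_mk]
  refine forall₂_congr fun u v => imp_congr_right fun _ => ?_
  rw [add_div_sqrt_two_eq_sqrt_sq_add_sq_iff (by positivity), Nat.cast_inj]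

theorem somborIndex_sq_le_card_edgeFinset_mul_sum_degree_pow_three :
    somborIndex G ^ 2 ≤ #G.edgeFinset * ∑ v, (G.degree v : ℝ) ^ 3 := by
  refine sq_sum_le_card_mul_sum_sq.trans_eq ?_
  rw [sum_degree_pow_three_eq_sum_edgeFinset]
  congr! 2 with e
  induction e with
  | _ u v => exact Real.sq_sqrt (by positivity)

theorem somborIndex_le_sqrt_card_edgeFinset_mul_maxDegree_mul_firstZagreb :
    somborIndex G ≤ √(#G.edgeFinset * G.maxDegree * firstZagreb G) := by
  apply Real.le_sqrt_of_sq_le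
  calc somborIndex G ^ 2
      ≤ #G.edgeFinset * ∑ v, (G.degree v : ℝ) ^ 3 :=
        somborIndex_sq_le_card_edgeFinset_mul_sum_degree_pow_three G
    _ ≤ #G.edgeFinset * (G.maxDegree * firstZagreb G) := by
        gcongr
        exact sum_degree_pow_three_le_maxDegree_mul_firstZagreb G
    _ = #G.edgeFinset * G.maxDegree * firstZagreb G := (mul_assoc _ _ _).symm

theorem sombor_between_firstZagreb_general :
    (firstZagreb G / √2 ≤ somborIndex G ∧
      somborIndex G ≤ √(#G.edgeFinset * G.maxDegree * firstZagreb G)) ∧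
      (firstZagreb G / √2 = somborIndex G ↔ ∀ u v, G.Adj u v → G.degree u = G.degree v) :=
  ⟨⟨firstZagreb_div_sqrt_two_le_somborIndex G,
    somborIndex_le_sqrt_card_edgeFinset_mul_maxDegree_mul_firstZagreb G⟩,
    firstZagreb_div_sqrt_two_eq_somborIndex_iff G⟩

end

theorem sombor_between_firstZagreb [Fintype V] [DecidableEq V]
    (G : SimpleGraph V) [DecidableRel G.Adj] :
    (firstZagreb G / Real.sqrt 2 ≤ somborIndex G ∧
      somborIndex G ≤
        Real.sqrt ((G.edgeFinset.card : ℝ) * (G.maxDegree : ℝ) * firstZagreb G)) ∧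
      ((∃ k : ℕ, G.IsRegularOfDegree k) →
        firstZagreb G / Real.sqrt 2 = somborIndex G) := by
  obtain ⟨bounds, eq_iff⟩ := sombor_between_firstZagreb_general G
  exact ⟨bounds, fun ⟨_, hk⟩ => eq_iff.mpr fun u v _ => (hk u).trans (hk v).symm⟩
end
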